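/- Let C be a 2-reduced cocommutative dg coalgebra over ℚ and t : C ⇝ ΩC its universal twisting chain. For every left dg ΩC-module M, the counit of the (t^! ⊣ t_*) adjunction, t^! t_* M = ΩC ⊗_t (C ⊗^t M) → M, given by a ⊗ c ⊗ m ↦ ε(c)·(a·m), is a quasi-isomorphism of ΩC-modules, natural in M. -/

import Mathlib

open scoped TensorProduct

noncomputable section

/-- A homologically graded differential graded `ℚ`-vector space (chain complex of
`ℚ`-vector spaces presented as a graded module with a degree `-1` square-zero differential). -/
structure DGVect : Type 1 where
  carrier : Type
  [isAddCommGroup : AddCommGroup carrier]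
  [isModule : Module ℚ carrier]
  grading : ℤ → Submodule ℚ carrier
  [isDecomp : DirectSum.Decomposition grading]
  d : carrier →ₗ[ℚ] carrier
  d_mem : ∀ (n : ℤ), ∀ x ∈ grading n, d x ∈ grading (n - 1)
  d_sq : d.comp d = 0

attribute [instance] DGVect.isAddCommGroup DGVect.isModule DGVect.isDecomp

/-- The operator acting on the degree `n` graded component by `(-1)^(k*n)`. -/
def signOpOf {V : Type} [AddCommGroup V] [Module ℚ V] (g : ℤ → Submodule ℚ V)
    [DirectSum.Decomposition g] (k : ℤ) : V →ₗ[ℚ] V :=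
  (DirectSum.toModule ℚ ℤ V fun n => ((-1 : ℚ) ^ (k * n)) • (g n).subtype).comp
    (DirectSum.decomposeLinearEquiv g).toLinearMap

/-- The Koszul parity operator, acting by `(-1)^n` in degree `n`. -/
def parityOf {V : Type} [AddCommGroup V] [Module ℚ V] (g : ℤ → Submodule ℚ V)
    [DirectSum.Decomposition g] : V →ₗ[ℚ] V := signOpOf g 1

def DGVect.parity (V : DGVect) : V.carrier →ₗ[ℚ] V.carrier := parityOf V.grading

/-- A graded object is bounded below if it vanishes in all sufficiently negative degrees. -/
def DGVect.BoundedBelow (V : DGVect) : Prop := ∃ b : ℤ, ∀ n : ℤ, n < b → V.grading n = ⊥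

/-- The Koszul signed braiding `v ⊗ w ↦ (-1)^{|v||w|} w ⊗ v` of graded vector spaces. -/
def kSwapOf {V W : Type} [AddCommGroup V] [Module ℚ V] [AddCommGroup W] [Module ℚ W]
    (gV : ℤ → Submodule ℚ V) (gW : ℤ → Submodule ℚ W)
    [DirectSum.Decomposition gV] [DirectSum.Decomposition gW] :
    V ⊗[ℚ] W →ₗ[ℚ] W ⊗[ℚ] V :=
  TensorProduct.lift
    ((DirectSum.toModule ℚ ℤ (W →ₗ[ℚ] W ⊗[ℚ] V) (fun i =>
        (((DirectSum.toModule ℚ ℤ (V →ₗ[ℚ] W ⊗[ℚ] V) (fun j =>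
              ((-1 : ℚ) ^ (i * j)) • ((TensorProduct.mk ℚ W V).comp (gW j).subtype))).comp
            (DirectSum.decomposeLinearEquiv gW).toLinearMap).flip).comp
          (gV i).subtype)).comp
      (DirectSum.decomposeLinearEquiv gV).toLinearMap)

/-- The degree `n` part of the tensor product grading:
the span of the homogeneous tensors of total degree `n`. -/
def tensorGrading {V W : Type} [AddCommGroup V] [Module ℚ V] [AddCommGroup W] [Module ℚ W]
    (gV : ℤ → Submodule ℚ V) (gW : ℤ → Submodule ℚ W) (n : ℤ) : Submodule ℚ (V ⊗[ℚ] W) :=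
  ⨆ p : {p : ℤ × ℤ // p.1 + p.2 = n},
    LinearMap.range (TensorProduct.map (gV p.1.1).subtype (gW p.1.2).subtype)

/-- `f` is a quasi-isomorphism from the complex `(V, dV)` to the complex `(W, dW)`:
it induces a bijection on homology (`ker d / im d`). -/
def IsQuasiIso {V W : Type} [AddCommGroup V] [Module ℚ V] [AddCommGroup W] [Module ℚ W]
    (dV : V →ₗ[ℚ] V) (dW : W →ₗ[ℚ] W) (f : V →ₗ[ℚ] W) : Prop :=
  (∀ x : V, dV x = 0 → (∃ y, f x = dW y) → ∃ z, x = dV z) ∧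
  (∀ w : W, dW w = 0 → ∃ x, dV x = 0 ∧ ∃ y, w - f x = dW y)

/-- A differential graded algebra over `ℚ`. -/
structure DGAlgebra extends DGVect where
  mul : carrier →ₗ[ℚ] carrier →ₗ[ℚ] carrier
  one : carrier
  one_mem : one ∈ grading 0
  mul_mem : ∀ (i j : ℤ) (x y : carrier), x ∈ grading i → y ∈ grading j →
    mul x y ∈ grading (i + j)
  mul_assoc' : ∀ x y z : carrier, mul (mul x y) z = mul x (mul y z)
  one_mul' : ∀ x : carrier, mul one x = x
  mul_one' : ∀ x : carrier, mul x one = x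
  leibniz : ∀ (i : ℤ) (x y : carrier), x ∈ grading i →
    d (mul x y) = mul (d x) y + ((-1 : ℚ) ^ i) • mul x (d y)

/-- The multiplication of a dg algebra as a map out of the tensor product. -/
def DGAlgebra.mulMap (A : DGAlgebra) : A.carrier ⊗[ℚ] A.carrier →ₗ[ℚ] A.carrier :=
  TensorProduct.lift A.mul

/-- A dg algebra is connective if it is concentrated in non-negative degrees. -/
def DGAlgebra.Connective (A : DGAlgebra) : Prop := ∀ n : ℤ, n < 0 → A.grading n = ⊥

/-- A (coassociative counital) differential graded coalgebra over `ℚ`,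
non-negatively graded. -/
structure DGCoalgebra extends DGVect where
  comul : carrier →ₗ[ℚ] carrier ⊗[ℚ] carrier
  counit : carrier →ₗ[ℚ] ℚ
  nonneg : ∀ n : ℤ, n < 0 → grading n = ⊥
  comul_mem : ∀ (n : ℤ), ∀ x ∈ grading n, comul x ∈ tensorGrading grading grading n
  counit_zero : ∀ (n : ℤ), n ≠ 0 → ∀ x ∈ grading n, counit x = 0
  coassoc : (TensorProduct.assoc ℚ carrier carrier carrier).toLinearMap.comp
      ((TensorProduct.map comul LinearMap.id).comp comul)
      = (TensorProduct.map LinearMap.id comul).comp comul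
  counit_comul_left : (TensorProduct.lid ℚ carrier).toLinearMap.comp
      ((TensorProduct.map counit LinearMap.id).comp comul) = LinearMap.id
  counit_comul_right : (TensorProduct.rid ℚ carrier).toLinearMap.comp
      ((TensorProduct.map LinearMap.id counit).comp comul) = LinearMap.id
  comul_chain : comul.comp d
      = (TensorProduct.map d LinearMap.id + TensorProduct.map (parityOf grading) d).comp comul
  counit_chain : counit.comp d = 0

/-- Cocommutativity: the comultiplication is invariant under the Koszul signed twist. -/
def DGCoalgebra.Cocomm (C : DGCoalgebra) : Prop :=
  (kSwapOf C.grading C.grading).comp C.comul = C.comul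

/-- A coaugmented dg coalgebra: a dg coalgebra with a coaugmentation `η : ℚ → C`,
recorded by the grouplike element `one = η 1` in degree `0`. -/
structure CoaugDGCoalgebra extends DGCoalgebra where
  one : carrier
  one_mem : one ∈ grading 0
  counit_one : counit one = 1
  comul_one : comul one = one ⊗ₜ[ℚ] one

/-- A coaugmented dg coalgebra is 2-reduced if `C₀ = ℚ` (spanned by the coaugmentation)
and `C₁ = 0`. -/
def CoaugDGCoalgebra.TwoReduced (C : CoaugDGCoalgebra) : Prop :=
  C.grading 0 = Submodule.span ℚ {C.one} ∧ C.grading 1 = ⊥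

/-- A twisting chain `τ : C ⇝ A`: a degree `-1` linear map satisfying
`d(τc) = -τ(dc) - (-1)^{|c₍₀₎|} τ(c₍₀₎)·τ(c₍₁₎)`. -/
structure TwistingChain (C : DGCoalgebra) (A : DGAlgebra) where
  toFun : C.carrier →ₗ[ℚ] A.carrier
  mem : ∀ (n : ℤ), ∀ x ∈ C.grading n, toFun x ∈ A.grading (n - 1)
  twist : A.d.comp toFun + toFun.comp C.d
      + A.mulMap.comp ((TensorProduct.map (toFun.comp (parityOf C.grading)) toFun).comp C.comul)
      = 0

/-- A left dg module over a dg algebra. -/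
structure DGModule (A : DGAlgebra) extends DGVect where
  smul : A.carrier →ₗ[ℚ] carrier →ₗ[ℚ] carrier
  smul_mem : ∀ (i j : ℤ) (a : A.carrier) (x : carrier), a ∈ A.grading i → x ∈ grading j →
    smul a x ∈ grading (i + j)
  one_smul' : ∀ x : carrier, smul A.one x = x
  mul_smul' : ∀ (a b : A.carrier) (x : carrier), smul (A.mul a b) x = smul a (smul b x)
  leibniz : ∀ (i : ℤ) (a : A.carrier) (x : carrier), a ∈ A.grading i →
    d (smul a x) = smul (A.d a) x + ((-1 : ℚ) ^ i) • smul a (d x)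

/-- The action of a dg module as a map out of the tensor product. -/
def DGModule.actionMap {A : DGAlgebra} (M : DGModule A) :
    A.carrier ⊗[ℚ] M.carrier →ₗ[ℚ] M.carrier := TensorProduct.lift M.smul

/-- A left dg comodule over a dg coalgebra. -/
structure DGComodule (C : DGCoalgebra) extends DGVect where
  coact : carrier →ₗ[ℚ] C.carrier ⊗[ℚ] carrier
  coact_mem : ∀ (n : ℤ), ∀ x ∈ grading n, coact x ∈ tensorGrading C.grading grading n
  coassoc : (TensorProduct.assoc ℚ C.carrier C.carrier carrier).toLinearMap.comp
      ((TensorProduct.map C.comul LinearMap.id).comp coact)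
      = (TensorProduct.map LinearMap.id coact).comp coact
  counit_coact : (TensorProduct.lid ℚ carrier).toLinearMap.comp
      ((TensorProduct.map C.counit LinearMap.id).comp coact) = LinearMap.id
  coact_chain : coact.comp d
      = (TensorProduct.map C.d LinearMap.id + TensorProduct.map (parityOf C.grading) d).comp coact

/-- Morphisms of dg modules: degree `0` graded chain maps commuting with the action. -/
def IsModuleHom (A : DGAlgebra) (M M' : DGModule A)
    (g : M.carrier →ₗ[ℚ] M'.carrier) : Prop :=
  (∀ (n : ℤ), ∀ x ∈ M.grading n, g x ∈ M'.grading n) ∧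
  g.comp M.d = M'.d.comp g ∧
  g.comp M.actionMap = M'.actionMap.comp (TensorProduct.map LinearMap.id g)

/-- Morphisms of dg comodules: degree `0` graded chain maps commuting with the coaction. -/
def IsComoduleHom (C : DGCoalgebra) (N N' : DGComodule C)
    (f : N.carrier →ₗ[ℚ] N'.carrier) : Prop :=
  (∀ (n : ℤ), ∀ x ∈ N.grading n, f x ∈ N'.grading n) ∧
  f.comp N.d = N'.d.comp f ∧
  (TensorProduct.map LinearMap.id f).comp N.coact = N'.coact.comp f

/-- The `A`-action on a twisted extension `A ⊗_τ N`: multiplication on the first factor. -/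
def extAction (A : DGAlgebra) (N : Type) [AddCommGroup N] [Module ℚ N] :
    A.carrier ⊗[ℚ] (A.carrier ⊗[ℚ] N) →ₗ[ℚ] A.carrier ⊗[ℚ] N :=
  (TensorProduct.map A.mulMap LinearMap.id).comp
    (TensorProduct.assoc ℚ A.carrier A.carrier N).symm.toLinearMap

/-- The differential of the twisted extension `A ⊗_τ N`:
`d(a ⊗ n) = da ⊗ n + (-1)^{|a|} a ⊗ dn - (-1)^{|a|} a·τ(n₍₀₎) ⊗ n₍₁₎`
for a `C`-comodule `(N, dN, ρ)`. -/
def extDiff (C : DGCoalgebra) (A : DGAlgebra) (τ : TwistingChain C A)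
    (N : Type) [AddCommGroup N] [Module ℚ N]
    (dN : N →ₗ[ℚ] N) (ρ : N →ₗ[ℚ] C.carrier ⊗[ℚ] N) :
    A.carrier ⊗[ℚ] N →ₗ[ℚ] A.carrier ⊗[ℚ] N :=
  TensorProduct.map A.d LinearMap.id + TensorProduct.map (parityOf A.grading) dN
    - (TensorProduct.map
        (A.mulMap.comp (TensorProduct.map (parityOf A.grading) τ.toFun)) LinearMap.id).comp
        ((TensorProduct.assoc ℚ A.carrier C.carrier N).symm.toLinearMap.comp
          (TensorProduct.map LinearMap.id ρ))

/-- The `C`-coaction on a twisted coextension `C ⊗^τ M`, namely `Δ ⊗ id`. -/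
def coextCoact (C : DGCoalgebra) (M : Type) [AddCommGroup M] [Module ℚ M] :
    C.carrier ⊗[ℚ] M →ₗ[ℚ] C.carrier ⊗[ℚ] (C.carrier ⊗[ℚ] M) :=
  (TensorProduct.assoc ℚ C.carrier C.carrier M).toLinearMap.comp
    (TensorProduct.map C.comul LinearMap.id)

/-- The differential of the twisted coextension `C ⊗^τ M`, expressed in terms of the map
`tact : C ⊗ M → M`, `c ⊗ m ↦ τ(c)·m`:
`d(c ⊗ m) = dc ⊗ m + (-1)^{|c|} c ⊗ dm + (-1)^{|c₍₀₎|} c₍₀₎ ⊗ τ(c₍₁₎)·m`. -/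
def coextDiffFrom (C : DGCoalgebra) (M : Type) [AddCommGroup M] [Module ℚ M]
    (dM : M →ₗ[ℚ] M) (tact : C.carrier ⊗[ℚ] M →ₗ[ℚ] M) :
    C.carrier ⊗[ℚ] M →ₗ[ℚ] C.carrier ⊗[ℚ] M :=
  TensorProduct.map C.d LinearMap.id + TensorProduct.map (parityOf C.grading) dM
    + (TensorProduct.map (parityOf C.grading) tact).comp (coextCoact C M)

/-- The differential of the twisted coextension `C ⊗^τ M` of an `A`-module `(M, dM, act)`. -/
def coextDiff (C : DGCoalgebra) (A : DGAlgebra) (τ : TwistingChain C A)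
    (M : Type) [AddCommGroup M] [Module ℚ M]
    (dM : M →ₗ[ℚ] M) (act : A.carrier ⊗[ℚ] M →ₗ[ℚ] M) :
    C.carrier ⊗[ℚ] M →ₗ[ℚ] C.carrier ⊗[ℚ] M :=
  coextDiffFrom C M dM (act.comp (TensorProduct.map τ.toFun LinearMap.id))

/-- Morphisms of dg algebras. -/
structure DGAlgebraHom (A B : DGAlgebra) where
  toLinearMap : A.carrier →ₗ[ℚ] B.carrier
  mem : ∀ (n : ℤ), ∀ x ∈ A.grading n, toLinearMap x ∈ B.grading n
  chain : toLinearMap.comp A.d = B.d.comp toLinearMap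
  map_one : toLinearMap A.one = B.one
  map_mul : ∀ x y : A.carrier, toLinearMap (A.mul x y) = B.mul (toLinearMap x) (toLinearMap y)

/-- Data exhibiting a dg algebra as the cobar construction `ΩC` of a coaugmented
dg coalgebra `C`, via the universal twisting chain `t : C ⇝ ΩC`:
dg algebra maps `ΩC → A` correspond bijectively to twisting chains `C ⇝ A`
vanishing on the coaugmentation. -/
structure CobarData (C : CoaugDGCoalgebra) where
  alg : DGAlgebra
  t : TwistingChain C.toDGCoalgebra alg
  t_one : t.toFun C.one = 0
  univ : ∀ (A : DGAlgebra) (τ : TwistingChain C.toDGCoalgebra A), τ.toFun C.one = 0 →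
    ∃! F : DGAlgebraHom alg A, F.toLinearMap.comp t.toFun = τ.toFun

/-- A morphism of `C`-comodules is a `t`-equivalence if the induced morphism of twisted
extensions `ΩC ⊗_t N → ΩC ⊗_t M` is a quasi-isomorphism. -/
def IsTEquiv (C : CoaugDGCoalgebra) (Ω : CobarData C) (N M : DGComodule C.toDGCoalgebra)
    (f : N.carrier →ₗ[ℚ] M.carrier) : Prop :=
  IsQuasiIso (extDiff C.toDGCoalgebra Ω.alg Ω.t N.carrier N.d N.coact)
    (extDiff C.toDGCoalgebra Ω.alg Ω.t M.carrier M.d M.coact)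
    (TensorProduct.map LinearMap.id f)

/-! ## Statement 1: the counit of the Koszul adjunction is a quasi-isomorphism -/

/-- The counit `t^! t_* M = ΩC ⊗_t (C ⊗^t M) → M`, `a ⊗ c ⊗ m ↦ ε(c)·(a·m)`. -/
def cobarCounit (C : CoaugDGCoalgebra) (Ω : CobarData C) (M : DGModule Ω.alg) :
    Ω.alg.carrier ⊗[ℚ] (C.carrier ⊗[ℚ] M.carrier) →ₗ[ℚ] M.carrier :=
  M.actionMap.comp (TensorProduct.map LinearMap.id
    ((TensorProduct.lid ℚ M.carrier).toLinearMap.comp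
      (TensorProduct.map C.counit LinearMap.id)))

/-!
As an ungraded algebra, `ΩC` is free on the generators `tc` subject only to `t1 = 0`. Its universal
property speaks of dg algebras and twisting chains, but testing it on the cofree dg algebra on an
ungraded algebra `B`, into which homomorphisms and twisting chains are just algebra maps and linear
maps to `B`, forgets the gradings and the differentials.

By freeness, the derivations of `ΩC` are the linear maps on its generators, so the left module of
noncommutative differentials is free: the Koszul map `a ⊗ c ⊗ m ↦ a·tc ⊗ m - a ⊗ tc·m` identifies
`ΩC ⊗ C̄ ⊗ M` with the kernel of the action `π : ΩC ⊗ M → M`. Splitting `C = ℚ ⊕ C̄`, the complex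
`ΩC ⊗_t (C ⊗^t M)` becomes the cone of the inclusion `ker π → ΩC ⊗ M`, and the counit becomes the
projection of this cone to the cokernel `M` of that inclusion.
-/

section Parity

open DirectSum TensorProduct

theorem neg_one_zpow_mul_self (n : ℤ) : (-1 : ℚ) ^ n * (-1 : ℚ) ^ n = 1 := by
  rw [← mul_zpow, neg_mul_neg, one_mul, one_zpow]

theorem neg_one_zpow_sub_one (n : ℤ) : (-1 : ℚ) ^ (n - 1) = -(-1 : ℚ) ^ n := by
  rw [zpow_sub_one₀ (neg_ne_zero.2 one_ne_zero), inv_neg_one, mul_neg_one]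

theorem toModule_comp_decompose_of_mem {V W : Type} [AddCommGroup V] [Module ℚ V]
    [AddCommGroup W] [Module ℚ W] (g : ℤ → Submodule ℚ V) [Decomposition g]
    (f : ∀ n, g n →ₗ[ℚ] W) {n : ℤ} {x : V} (hx : x ∈ g n) :
    (toModule ℚ ℤ W f ∘ₗ (decomposeLinearEquiv g).toLinearMap) x = f n ⟨x, hx⟩ := by
  rw [LinearMap.comp_apply, LinearEquiv.coe_coe, decomposeLinearEquiv_apply,
    decompose_of_mem g hx, ← lof_eq_of ℚ, toModule_lof]

namespace DGVect

variable (V W : DGVect)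

theorem linearMap_ext_of_homogeneous {X : Type} [AddCommGroup X] [Module ℚ X]
    {f g : V.carrier →ₗ[ℚ] X} (h : ∀ n, ∀ x ∈ V.grading n, f x = g x) : f = g :=
  decompose_lhom_ext V.grading fun n => LinearMap.ext fun x => h n x x.2

variable {V W}

theorem d_d (x : V.carrier) : V.d (V.d x) = 0 := LinearMap.congr_fun V.d_sq x

theorem parity_of_mem {n : ℤ} {x : V.carrier} (hx : x ∈ V.grading n) :
    V.parity x = (-1 : ℚ) ^ n • x := by
  rw [parity, parityOf, signOpOf, toModule_comp_decompose_of_mem _ _ hx, one_mul]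
  rfl

theorem parity_mem {n : ℤ} {x : V.carrier} (hx : x ∈ V.grading n) :
    V.parity x ∈ V.grading n := by
  rw [parity_of_mem hx]
  exact Submodule.smul_mem _ _ hx

theorem parity_comp_parity : V.parity ∘ₗ V.parity = LinearMap.id := by
  refine V.linearMap_ext_of_homogeneous fun n x hx => ?_
  rw [LinearMap.comp_apply, parity_of_mem hx, map_smul, parity_of_mem hx, smul_smul,
    neg_one_zpow_mul_self, one_smul, LinearMap.id_apply]

theorem parity_parity (x : V.carrier) : V.parity (V.parity x) = x :=
  LinearMap.congr_fun parity_comp_parity x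

/-- The parity operator on the first factor of a tensor product. -/
def leftParity (V : DGVect) (N : Type) [AddCommGroup N] [Module ℚ N] :
    V.carrier ⊗[ℚ] N →ₗ[ℚ] V.carrier ⊗[ℚ] N :=
  TensorProduct.map V.parity LinearMap.id

theorem leftParity_leftParity {N : Type} [AddCommGroup N] [Module ℚ N] (z : V.carrier ⊗[ℚ] N) :
    V.leftParity N (V.leftParity N z) = z := by
  rw [leftParity, ← LinearMap.comp_apply, ← TensorProduct.map_comp, parity_comp_parity,
    LinearMap.id_comp, TensorProduct.map_id, LinearMap.id_apply]

theorem parity_comp_of_degree_neg_one (f : V.carrier →ₗ[ℚ] W.carrier)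
    (hf : ∀ n, ∀ x ∈ V.grading n, f x ∈ W.grading (n - 1)) :
    W.parity ∘ₗ f = -(f ∘ₗ V.parity) := by
  refine V.linearMap_ext_of_homogeneous fun n x hx => ?_
  rw [LinearMap.neg_apply, LinearMap.comp_apply, LinearMap.comp_apply, parity_of_mem hx,
    parity_of_mem (hf n x hx), map_smul, neg_one_zpow_sub_one, neg_smul]

theorem parity_comp_d : V.parity ∘ₗ V.d = -(V.d ∘ₗ V.parity) :=
  parity_comp_of_degree_neg_one V.d V.d_mem

end DGVect

end Parity

section UnderlyingAlgebra

namespace DGAlgebra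

variable (A : DGAlgebra)

/-- The ring underlying a dg algebra. -/
abbrev ring : Ring A.carrier :=
  { A.isAddCommGroup with
    mul := fun x y => A.mul x y
    one := A.one
    mul_assoc := A.mul_assoc'
    one_mul := A.one_mul'
    mul_one := A.mul_one'
    left_distrib := fun x => map_add (A.mul x)
    right_distrib := LinearMap.map_add₂ A.mul
    zero_mul := LinearMap.map_zero₂ A.mul
    mul_zero := fun x => map_zero (A.mul x) }

attribute [local instance] ring

/-- The ungraded `ℚ`-algebra underlying a dg algebra. -/
abbrev algebra : Algebra ℚ A.carrier :=
  Algebra.ofModule (LinearMap.map_smul₂ A.mul) fun r x y => map_smul (A.mul x) r y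

end DGAlgebra

attribute [local instance] DGAlgebra.ring DGAlgebra.algebra

namespace DGModule

variable {A : DGAlgebra} (M : DGModule A)

/-- The ungraded module underlying a dg module. -/
abbrev module : Module A.carrier M.carrier where
  smul a m := M.smul a m
  one_smul := M.one_smul'
  mul_smul := M.mul_smul'
  smul_zero a := map_zero (M.smul a)
  smul_add a := map_add (M.smul a)
  add_smul := LinearMap.map_add₂ M.smul
  zero_smul := LinearMap.map_zero₂ M.smul

attribute [local instance] module

theorem isScalarTower : IsScalarTower ℚ A.carrier M.carrier where
  smul_assoc := LinearMap.map_smul₂ M.smul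

end DGModule

attribute [local instance] DGModule.module DGModule.isScalarTower

namespace DGAlgebra

variable {A : DGAlgebra}

theorem d_one : A.d 1 = 0 := by
  have h := A.leibniz 0 1 1 A.one_mem
  change A.d (1 * 1) = A.d 1 * 1 + (-1 : ℚ) ^ (0 : ℤ) • (1 * A.d 1) at h
  simpa using h

theorem parity_mul (x y : A.carrier) : A.parity (x * y) = A.parity x * A.parity y := by
  suffices A.mul.compr₂ A.parity = A.mul.compl₁₂ A.parity A.parity from
    LinearMap.congr_fun₂ this x y
  refine A.linearMap_ext_of_homogeneous fun i x hx =>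
    A.linearMap_ext_of_homogeneous fun j y hy => ?_
  rw [LinearMap.compr₂_apply, LinearMap.compl₁₂_apply, DGVect.parity_of_mem hx,
    DGVect.parity_of_mem hy, DGVect.parity_of_mem (A.mul_mem i j x y hx hy),
    LinearMap.map_smul₂, map_smul, smul_smul, zpow_add₀ (by norm_num)]

theorem d_mul (x y : A.carrier) : A.d (x * y) = A.d x * y + A.parity x * A.d y := by
  suffices A.mul.compr₂ A.d = A.mul ∘ₗ A.d + A.mul.compl₁₂ A.parity A.d from
    LinearMap.congr_fun₂ this x y
  refine A.linearMap_ext_of_homogeneous fun i x hx => LinearMap.ext fun y => ?_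
  rw [LinearMap.compr₂_apply, A.leibniz i x y hx, LinearMap.add_apply, LinearMap.add_apply,
    LinearMap.compl₁₂_apply, LinearMap.comp_apply, DGVect.parity_of_mem hx, LinearMap.map_smul₂]

end DGAlgebra

theorem DGModule.d_smul {A : DGAlgebra} (M : DGModule A) (a : A.carrier) (m : M.carrier) :
    M.d (a • m) = A.d a • m + A.parity a • M.d m := by
  suffices M.smul.compr₂ M.d = M.smul ∘ₗ A.d + M.smul.compl₁₂ A.parity M.d from
    LinearMap.congr_fun₂ this a m
  refine A.linearMap_ext_of_homogeneous fun i x hx => LinearMap.ext fun y => ?_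
  rw [LinearMap.compr₂_apply, M.leibniz i x y hx, LinearMap.add_apply, LinearMap.add_apply,
    LinearMap.compl₁₂_apply, LinearMap.comp_apply, DGVect.parity_of_mem hx, LinearMap.map_smul₂]

end UnderlyingAlgebra

section Convolution

open TensorProduct

attribute [local instance] DGAlgebra.ring DGAlgebra.algebra

theorem tensorGrading_le {V W : Type} [AddCommGroup V] [Module ℚ V] [AddCommGroup W] [Module ℚ W]
    {gV : ℤ → Submodule ℚ V} {gW : ℤ → Submodule ℚ W} {n : ℤ} {S : Submodule ℚ (V ⊗[ℚ] W)}
    (h : ∀ p q : ℤ, p + q = n → ∀ v ∈ gV p, ∀ w ∈ gW q, v ⊗ₜ[ℚ] w ∈ S) :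
    tensorGrading gV gW n ≤ S := by
  refine iSup_le ?_
  rintro ⟨⟨p, q⟩, hpq⟩
  rw [LinearMap.range_eq_map, ← span_tmul_eq_top, Submodule.map_span, Submodule.span_le]
  rintro _ ⟨_, ⟨v, w, rfl⟩, rfl⟩
  exact h p q hpq v v.2 w w.2

namespace DGCoalgebra

variable (C : DGCoalgebra) {B : Type} [Ring B] [Algebra ℚ B]

/-- The ungraded coalgebra underlying a dg coalgebra. -/
abbrev coalgebra : Coalgebra ℚ C.carrier where
  comul := C.comul
  counit := C.counit
  coassoc := C.coassoc
  rTensor_counit_comp_comul :=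
    LinearMap.ext fun c => (LinearEquiv.eq_symm_apply (TensorProduct.lid ℚ C.carrier)).2
      (LinearMap.congr_fun C.counit_comul_left c)
  lTensor_counit_comp_comul :=
    LinearMap.ext fun c => (LinearEquiv.eq_symm_apply (TensorProduct.rid ℚ C.carrier)).2
      (LinearMap.congr_fun C.counit_comul_right c)

attribute [local instance] coalgebra

/-- The convolution product `f ⋆ g = μ ∘ (f ⊗ g) ∘ Δ`, without Koszul signs. -/
def conv : (C.carrier →ₗ[ℚ] B) →ₗ[ℚ] (C.carrier →ₗ[ℚ] B) →ₗ[ℚ] (C.carrier →ₗ[ℚ] B) :=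
  ((LinearMap.mul ℚ (WithConv (C.carrier →ₗ[ℚ] B))).compl₁₂
    (WithConv.linearEquiv ℚ _).symm.toLinearMap
    (WithConv.linearEquiv ℚ _).symm.toLinearMap).compr₂ (WithConv.linearEquiv ℚ _).toLinearMap

variable (f g h : C.carrier →ₗ[ℚ] B)

theorem conv_def : C.conv f g = LinearMap.mul' ℚ B ∘ₗ TensorProduct.map f g ∘ₗ C.comul := rfl

theorem conv_assoc : C.conv (C.conv f g) h = C.conv f (C.conv g h) :=
  congrArg WithConv.ofConv (mul_assoc (WithConv.toConv f) (WithConv.toConv g) (WithConv.toConv h))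

theorem algHom_comp_conv {B' : Type} [Ring B'] [Algebra ℚ B'] (F : B →ₐ[ℚ] B') :
    F.toLinearMap ∘ₗ C.conv f g = C.conv (F.toLinearMap ∘ₗ f) (F.toLinearMap ∘ₗ g) :=
  LinearMap.algHom_comp_convMul_distrib F (WithConv.toConv f) (WithConv.toConv g)

theorem comul_comp_parity :
    C.comul ∘ₗ C.parity = TensorProduct.map C.parity C.parity ∘ₗ C.comul := by
  refine C.linearMap_ext_of_homogeneous fun n x hx => ?_
  have key : tensorGrading C.grading C.grading n ≤ LinearMap.eqLocus
      ((-1 : ℚ) ^ n • LinearMap.id) (TensorProduct.map C.parity C.parity) :=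
    tensorGrading_le fun p q hpq v hv w hw => by
      rw [LinearMap.mem_eqLocus, map_tmul, DGVect.parity_of_mem hv, DGVect.parity_of_mem hw,
        smul_tmul_smul, ← hpq, zpow_add₀ (by norm_num)]
      rfl
  rw [LinearMap.comp_apply, DGVect.parity_of_mem hx, map_smul]
  exact key (C.comul_mem n x hx)

theorem counit_comp_parity : C.counit ∘ₗ C.parity = C.counit := by
  refine C.linearMap_ext_of_homogeneous fun n x hx => ?_
  rw [LinearMap.comp_apply, DGVect.parity_of_mem hx, map_smul]
  obtain rfl | hn := eq_or_ne n 0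
  · rw [zpow_zero, one_smul]
  · rw [C.counit_zero n hn x hx, smul_zero]

theorem conv_comp_parity :
    C.conv f g ∘ₗ C.parity = C.conv (f ∘ₗ C.parity) (g ∘ₗ C.parity) := by
  simp only [conv_def, LinearMap.comp_assoc, comul_comp_parity, TensorProduct.map_comp]

theorem conv_comp_d :
    C.conv f g ∘ₗ C.d = C.conv (f ∘ₗ C.d) g + C.conv (f ∘ₗ C.parity) (g ∘ₗ C.d) := by
  have h : C.comul ∘ₗ C.d = TensorProduct.map C.d LinearMap.id ∘ₗ C.comul
      + TensorProduct.map C.parity C.d ∘ₗ C.comul := C.comul_chain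
  simp only [conv_def, LinearMap.comp_assoc, h, LinearMap.comp_add]
  simp only [← LinearMap.comp_assoc _ _ (TensorProduct.map f g), ← TensorProduct.map_comp,
    LinearMap.comp_id]

theorem d_comp_conv {A : DGAlgebra} (f g : C.carrier →ₗ[ℚ] A.carrier) :
    A.d ∘ₗ C.conv f g = C.conv (A.d ∘ₗ f) g + C.conv (A.parity ∘ₗ f) (A.d ∘ₗ g) := by
  have h : A.d ∘ₗ LinearMap.mul' ℚ A.carrier = LinearMap.mul' ℚ A.carrier ∘ₗ
      TensorProduct.map A.d LinearMap.id + LinearMap.mul' ℚ A.carrier ∘ₗ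
      TensorProduct.map A.parity A.d :=
    TensorProduct.ext' fun x y => DGAlgebra.d_mul x y
  simp only [conv_def]
  rw [← LinearMap.comp_assoc, h, LinearMap.add_comp]
  simp only [LinearMap.comp_assoc]
  simp only [← LinearMap.comp_assoc _ (TensorProduct.map f g), ← TensorProduct.map_comp,
    LinearMap.id_comp]

/-- The value `-f ∘ d - (f ∘ P) ⋆ f` that the twisting equation forces on `d ∘ τ`, where `P` is
the parity operator, expressed through the values `f` of `τ`. -/
def twistingDifferential : C.carrier →ₗ[ℚ] B := -(f ∘ₗ C.d) - C.conv (f ∘ₗ C.parity) f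

theorem d_comp_eq_twistingDifferential_iff {A : DGAlgebra} (τ : C.carrier →ₗ[ℚ] A.carrier) :
    A.d ∘ₗ τ = C.twistingDifferential τ ↔
      A.d ∘ₗ τ + τ ∘ₗ C.d + C.conv (τ ∘ₗ C.parity) τ = 0 := by
  rw [twistingDifferential, ← neg_add', eq_neg_iff_add_eq_zero, add_assoc]

theorem twistingDifferential_twist :
    C.twistingDifferential f ∘ₗ C.d + C.conv (C.twistingDifferential f ∘ₗ C.parity) f
      = C.conv f (C.twistingDifferential f) := by
  have hdd : (f ∘ₗ C.d) ∘ₗ C.d = 0 := by rw [LinearMap.comp_assoc, C.d_sq, LinearMap.comp_zero]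
  have hpd : (f ∘ₗ C.parity) ∘ₗ C.d = -((f ∘ₗ C.d) ∘ₗ C.parity) := by
    rw [LinearMap.comp_assoc, DGVect.parity_comp_d, LinearMap.comp_neg, LinearMap.comp_assoc]
  have hpp : (f ∘ₗ C.parity) ∘ₗ C.parity = f := by
    rw [LinearMap.comp_assoc, DGVect.parity_comp_parity, LinearMap.comp_id]
  simp only [twistingDifferential, LinearMap.sub_comp, LinearMap.neg_comp, conv_comp_d,
    conv_comp_parity, map_sub, map_neg, LinearMap.sub_apply, LinearMap.neg_apply, hdd, hpd, hpp,
    conv_assoc]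
  abel

theorem d_comp_twistingDifferential {A : DGAlgebra} {τ : C.carrier →ₗ[ℚ] A.carrier}
    (hτ : A.parity ∘ₗ τ = -(τ ∘ₗ C.parity)) :
    A.d ∘ₗ C.twistingDifferential τ = C.conv τ (A.d ∘ₗ τ)
      - (A.d ∘ₗ τ) ∘ₗ C.d - C.conv ((A.d ∘ₗ τ) ∘ₗ C.parity) τ := by
  have hpp : A.parity ∘ₗ τ ∘ₗ C.parity = -τ := by
    rw [← LinearMap.comp_assoc, hτ, LinearMap.neg_comp, LinearMap.comp_assoc,
      DGVect.parity_comp_parity, LinearMap.comp_id]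
  rw [twistingDifferential, LinearMap.comp_sub, LinearMap.comp_neg, d_comp_conv, hpp, map_neg,
    LinearMap.neg_apply, LinearMap.comp_assoc, LinearMap.comp_assoc]
  abel

end DGCoalgebra

namespace TwistingChain

variable {C : DGCoalgebra} {A : DGAlgebra} (τ : TwistingChain C A)

theorem d_comp_toFun : A.d ∘ₗ τ.toFun = C.twistingDifferential τ.toFun :=
  (C.d_comp_eq_twistingDifferential_iff τ.toFun).2 τ.twist

theorem parity_comp_toFun : A.parity ∘ₗ τ.toFun = -(τ.toFun ∘ₗ C.parity) :=
  DGVect.parity_comp_of_degree_neg_one τ.toFun τ.mem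

end TwistingChain

end Convolution

section FinsuppGrading

open DirectSum

variable (W : Type) [AddCommGroup W] [Module ℚ W]

/-- The grading of `ℤ →₀ W` with one copy of `W` in each degree. -/
abbrev finsuppGrading (n : ℤ) : Submodule ℚ (ℤ →₀ W) := LinearMap.range (Finsupp.lsingle n)

variable {W} in
theorem single_mem_finsuppGrading (n : ℤ) (w : W) : Finsupp.single n w ∈ finsuppGrading W n :=
  ⟨w, rfl⟩

instance finsuppGradingDecomposition : Decomposition (finsuppGrading W) :=
  Decomposition.ofLinearMap (finsuppGrading W)
    (Finsupp.lsum ℚ fun n =>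
      lof ℚ ℤ (fun n => finsuppGrading W n) n ∘ₗ (Finsupp.lsingle n).rangeRestrict)
    (by
      refine Finsupp.lhom_ext fun n w => ?_
      rw [LinearMap.comp_apply, Finsupp.lsum_single, LinearMap.comp_apply, coeLinearMap_lof]
      rfl)
    (by
      refine linearMap_ext ℚ fun n => LinearMap.ext ?_
      rintro ⟨_, w, rfl⟩
      rw [LinearMap.comp_apply, LinearMap.comp_apply, coeLinearMap_lof]
      exact Finsupp.lsum_single _ _ _ _)

end FinsuppGrading

section Cofree

open DirectSum

attribute [local instance] DGAlgebra.ring DGAlgebra.algebra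

variable (B : Type) [Ring B] [Algebra ℚ B]

/-- The product `(p + p'ε)(q + q'ε) = pq + (p'q + (-1)ⁱ pq')ε` of the cofree dg algebra on `B`,
for a left factor of degree `i`. -/
def cofreeMulOfDegree (i : ℤ) : B × B →ₗ[ℚ] B × B →ₗ[ℚ] B × B :=
  LinearMap.mk₂ ℚ (fun p q => (p.1 * q.1, p.2 * q.1 + (-1 : ℚ) ^ i • (p.1 * q.2)))
    (fun p p' q => by ext <;> simp [add_mul, add_add_add_comm])
    (fun r p q => by ext <;> simp [smul_comm r])
    (fun p q q' => by ext <;> simp [mul_add, add_add_add_comm])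
    (fun r p q => by ext <;> simp [smul_comm r])

theorem cofreeMulOfDegree_apply (i : ℤ) (p q : B × B) :
    cofreeMulOfDegree B i p q = (p.1 * q.1, p.2 * q.1 + (-1 : ℚ) ^ i • (p.1 * q.2)) := rfl

/-- The multiplication of the cofree dg algebra on `B`. -/
def cofreeMul : (ℤ →₀ B × B) →ₗ[ℚ] (ℤ →₀ B × B) →ₗ[ℚ] (ℤ →₀ B × B) :=
  Finsupp.lsum ℚ fun i => LinearMap.flip (Finsupp.lsum ℚ fun j => LinearMap.flip
    ((cofreeMulOfDegree B i).compr₂ (Finsupp.lsingle (i + j))))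

theorem cofreeMul_single (i j : ℤ) (p q : B × B) :
    cofreeMul B (Finsupp.single i p) (Finsupp.single j q)
      = Finsupp.single (i + j) (cofreeMulOfDegree B i p q) := by
  simp [cofreeMul]

/-- The differential `ε ↦ 1` of the cofree dg algebra on `B`. -/
def cofreeDifferential : (ℤ →₀ B × B) →ₗ[ℚ] (ℤ →₀ B × B) :=
  Finsupp.lsum ℚ fun i => Finsupp.lsingle (i - 1) ∘ₗ LinearMap.inl ℚ B B ∘ₗ LinearMap.snd ℚ B B

theorem cofreeDifferential_single (i : ℤ) (p : B × B) :
    cofreeDifferential B (Finsupp.single i p) = Finsupp.single (i - 1) (p.2, 0) := by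
  rw [cofreeDifferential, Finsupp.lsum_single]
  rfl

theorem cofreeMul_assoc (x y z : ℤ →₀ B × B) :
    cofreeMul B (cofreeMul B x y) z = cofreeMul B x (cofreeMul B y z) := by
  induction x using Finsupp.induction_linear with
  | zero => simp only [map_zero, LinearMap.zero_apply]
  | add x x' hx hx' => simp only [map_add, LinearMap.add_apply, hx, hx']
  | single i p =>
  induction y using Finsupp.induction_linear with
  | zero => simp only [map_zero, LinearMap.zero_apply]
  | add y y' hy hy' => simp only [map_add, LinearMap.add_apply, hy, hy']
  | single j q =>
  induction z using Finsupp.induction_linear with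
  | zero => simp only [map_zero]
  | add z z' hz hz' => simp only [map_add, hz, hz']
  | single k r =>
    simp [cofreeMul_single, cofreeMulOfDegree_apply, add_assoc, mul_assoc, add_mul, mul_add,
      zpow_add₀, smul_smul]

theorem cofreeDifferential_leibniz (i : ℤ) (p : B × B) (y : ℤ →₀ B × B) :
    cofreeDifferential B (cofreeMul B (Finsupp.single i p) y)
      = cofreeMul B (cofreeDifferential B (Finsupp.single i p)) y
        + (-1 : ℚ) ^ i • cofreeMul B (Finsupp.single i p) (cofreeDifferential B y) := by
  induction y using Finsupp.induction_linear with
  | zero => simp only [map_zero, smul_zero, add_zero]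
  | add y y' hy hy' => simp only [map_add, hy, hy', smul_add]; abel
  | single j q =>
    simp only [cofreeMul_single, cofreeDifferential_single, cofreeMulOfDegree_apply,
      sub_add_eq_add_sub, add_sub_assoc', Finsupp.smul_single, ← Finsupp.single_add,
      neg_one_zpow_sub_one]
    congr 1
    ext <;> simp

/-- The cofree dg algebra on an ungraded algebra `B`: a copy of `B ⊕ Bε` in every degree, with
`|ε| = 1`, `ε² = 0` and `dε = 1`. Homomorphisms and twisting chains into it are the ungraded
homomorphisms and linear maps into `B`, which turns the universal property of the cobar
construction among dg algebras into one among ungraded algebras. -/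
def cofreeDGAlgebra : DGAlgebra where
  carrier := ℤ →₀ B × B
  grading := finsuppGrading (B × B)
  d := cofreeDifferential B
  d_mem := by
    rintro n _ ⟨p, rfl⟩
    exact cofreeDifferential_single B n p ▸ single_mem_finsuppGrading _ _
  d_sq := Finsupp.lhom_ext fun n p => by
    simp only [LinearMap.comp_apply, cofreeDifferential_single, Prod.mk_zero_zero,
      Finsupp.single_zero, LinearMap.zero_apply]
  mul := cofreeMul B
  one := Finsupp.single 0 (1, 0)
  one_mem := single_mem_finsuppGrading _ _
  mul_mem := by
    rintro i j _ _ ⟨p, rfl⟩ ⟨q, rfl⟩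
    exact cofreeMul_single B i j p q ▸ single_mem_finsuppGrading _ _
  mul_assoc' := cofreeMul_assoc B
  one_mul' := LinearMap.congr_fun <| show cofreeMul B (Finsupp.single 0 (1, 0)) = LinearMap.id from
    Finsupp.lhom_ext fun i p => by simp [cofreeMul_single, cofreeMulOfDegree_apply]
  mul_one' := LinearMap.congr_fun <|
    show (cofreeMul B).flip (Finsupp.single 0 (1, 0)) = LinearMap.id from
    Finsupp.lhom_ext fun i p => by simp [cofreeMul_single, cofreeMulOfDegree_apply]
  leibniz := by
    rintro i _ y ⟨p, rfl⟩
    exact cofreeDifferential_leibniz B i p y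

namespace cofreeDGAlgebra

/-- The algebra map `p + p'ε ↦ p` from the cofree dg algebra on `B` to `B`. -/
def eval : (cofreeDGAlgebra B).carrier →ₐ[ℚ] B :=
  let ev : (ℤ →₀ B × B) →ₗ[ℚ] B := Finsupp.lsum ℚ fun _ => LinearMap.fst ℚ B B
  have map_mul (x y : ℤ →₀ B × B) : ev (cofreeMul B x y) = ev x * ev y := by
    suffices (cofreeMul B).compr₂ ev = (LinearMap.mul ℚ B).compl₁₂ ev ev from
      LinearMap.congr_fun₂ this x y
    refine Finsupp.lhom_ext fun i p => Finsupp.lhom_ext fun j q => ?_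
    simp [ev, cofreeMul_single, cofreeMulOfDegree_apply]
  AlgHom.ofLinearMap (A := (cofreeDGAlgebra B).carrier) ev (Finsupp.lsum_single ℚ _ _ _) map_mul

theorem eval_single (i : ℤ) (p : B × B) : eval B (Finsupp.single i p) = p.1 :=
  Finsupp.lsum_single ℚ (fun _ : ℤ => LinearMap.fst ℚ B B) i p

theorem eval_d_single (i : ℤ) (p : B × B) :
    eval B ((cofreeDGAlgebra B).d (Finsupp.single i p)) = p.2 := by
  change eval B (cofreeDifferential B (Finsupp.single i p)) = p.2
  rw [cofreeDifferential_single]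
  exact eval_single ..

variable {B}

theorem ext_of_mem {n : ℤ} {x y : (cofreeDGAlgebra B).carrier}
    (hx : x ∈ (cofreeDGAlgebra B).grading n) (hy : y ∈ (cofreeDGAlgebra B).grading n)
    (h : eval B x = eval B y)
    (hd : eval B ((cofreeDGAlgebra B).d x) = eval B ((cofreeDGAlgebra B).d y)) : x = y := by
  obtain ⟨p, rfl⟩ := hx
  obtain ⟨q, rfl⟩ := hy
  have hpq : p = q := Prod.ext ((eval_single B n p).symm.trans (h.trans (eval_single B n q)))
    ((eval_d_single B n p).symm.trans (hd.trans (eval_d_single B n q)))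
  rw [hpq]

section OfPair

variable {V : DGVect} (k : ℤ) (f g : V.carrier →ₗ[ℚ] B)

/-- The map of degree `-k` into the cofree dg algebra sending a homogeneous `x` to
`f x + g x ε`. -/
def ofPair : V.carrier →ₗ[ℚ] (cofreeDGAlgebra B).carrier :=
  toModule ℚ ℤ (ℤ →₀ B × B)
      (fun n => Finsupp.lsingle (n - k) ∘ₗ f.prod g ∘ₗ (V.grading n).subtype)
    ∘ₗ (decomposeLinearEquiv V.grading).toLinearMap

theorem ofPair_of_mem {n : ℤ} {x : V.carrier} (hx : x ∈ V.grading n) :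
    ofPair k f g x = Finsupp.single (n - k) (f x, g x) :=
  toModule_comp_decompose_of_mem V.grading _ hx

theorem ofPair_mem {n : ℤ} {x : V.carrier} (hx : x ∈ V.grading n) :
    ofPair k f g x ∈ (cofreeDGAlgebra B).grading (n - k) :=
  ofPair_of_mem k f g hx ▸ single_mem_finsuppGrading _ _

theorem eval_ofPair (x : V.carrier) : eval B (ofPair k f g x) = f x := by
  suffices (eval B).toLinearMap ∘ₗ ofPair k f g = f from LinearMap.congr_fun this x
  exact V.linearMap_ext_of_homogeneous fun _ _ hx =>
    (congrArg (eval B) (ofPair_of_mem k f g hx)).trans (eval_single B _ _)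

theorem eval_d_ofPair (x : V.carrier) :
    eval B ((cofreeDGAlgebra B).d (ofPair k f g x)) = g x := by
  suffices (eval B).toLinearMap ∘ₗ (cofreeDGAlgebra B).d ∘ₗ ofPair k f g = g from
    LinearMap.congr_fun this x
  exact V.linearMap_ext_of_homogeneous fun _ _ hx =>
    (congrArg (eval B ∘ (cofreeDGAlgebra B).d) (ofPair_of_mem k f g hx)).trans (eval_d_single B _ _)

end OfPair

end cofreeDGAlgebra

end Cofree

section Freeness

attribute [local instance] DGAlgebra.ring DGAlgebra.algebra

namespace DGCoalgebra

variable (C : DGCoalgebra)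

theorem algHom_comp_twistingDifferential {B B' : Type} [Ring B] [Algebra ℚ B] [Ring B']
    [Algebra ℚ B'] (F : B →ₐ[ℚ] B') (f : C.carrier →ₗ[ℚ] B) :
    F.toLinearMap ∘ₗ C.twistingDifferential f = C.twistingDifferential (F.toLinearMap ∘ₗ f) := by
  rw [twistingDifferential, LinearMap.comp_sub, LinearMap.comp_neg, algHom_comp_conv]
  rfl

theorem twistingDifferential_mem {A : DGAlgebra} {τ : C.carrier →ₗ[ℚ] A.carrier}
    (hτ : ∀ n, ∀ x ∈ C.grading n, τ x ∈ A.grading (n - 1)) (n : ℤ) (x : C.carrier)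
    (hx : x ∈ C.grading n) : C.twistingDifferential τ x ∈ A.grading (n - 1 - 1) := by
  have hconv : tensorGrading C.grading C.grading n ≤ (A.grading (n - 1 - 1)).comap
      (LinearMap.mul' ℚ A.carrier ∘ₗ TensorProduct.map (τ ∘ₗ C.parity) τ) :=
    tensorGrading_le fun p q hpq v hv w hw => by
      rw [← hpq, sub_sub, ← sub_add_sub_comm]
      exact A.mul_mem _ _ _ _ (hτ p _ (DGVect.parity_mem hv)) (hτ q w hw)
  exact Submodule.sub_mem _ (Submodule.neg_mem _ (hτ _ _ (C.d_mem n x hx)))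
    (hconv (C.comul_mem n x hx))

end DGCoalgebra

namespace CoaugDGCoalgebra

variable (C : CoaugDGCoalgebra)

theorem d_one : C.d C.one = 0 := by
  have h := C.d_mem 0 C.one C.one_mem
  rwa [C.nonneg _ (by norm_num), Submodule.mem_bot] at h

theorem twistingDifferential_one {B : Type} [Ring B] [Algebra ℚ B] {f : C.carrier →ₗ[ℚ] B}
    (hf : f C.one = 0) : C.twistingDifferential f C.one = 0 := by
  have hconv : C.conv (f ∘ₗ C.parity) f C.one = 0 := by
    rw [DGCoalgebra.conv_def, LinearMap.comp_apply, LinearMap.comp_apply, C.comul_one,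
      TensorProduct.map_tmul, hf, TensorProduct.tmul_zero, map_zero]
  rw [DGCoalgebra.twistingDifferential, LinearMap.sub_apply, LinearMap.neg_apply,
    LinearMap.comp_apply, d_one, map_zero, hconv, neg_zero, sub_zero]

end CoaugDGCoalgebra

namespace cofreeDGAlgebra

variable {B : Type} [Ring B] [Algebra ℚ B] {A : DGAlgebra} (F : A.carrier →ₐ[ℚ] B)

/-- The homomorphism of dg algebras corresponding to a homomorphism of ungraded algebras. -/
def lift : DGAlgebraHom A (cofreeDGAlgebra B) :=
  let φ : A.carrier →ₗ[ℚ] (cofreeDGAlgebra B).carrier :=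
    ofPair 0 F.toLinearMap (F.toLinearMap ∘ₗ A.d)
  have φ_mem (n : ℤ) (x : A.carrier) (hx : x ∈ A.grading n) :
      φ x ∈ (cofreeDGAlgebra B).grading n := by
    simpa only [sub_zero] using ofPair_mem 0 F.toLinearMap (F.toLinearMap ∘ₗ A.d) hx
  have eval_φ (x : A.carrier) : eval B (φ x) = F x := eval_ofPair ..
  have eval_d_φ (x : A.carrier) : eval B ((cofreeDGAlgebra B).d (φ x)) = F (A.d x) :=
    eval_d_ofPair ..
  { toLinearMap := φ
    mem := φ_mem
    chain := A.linearMap_ext_of_homogeneous fun n x hx => by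
      refine ext_of_mem (φ_mem _ _ (A.d_mem n x hx))
        ((cofreeDGAlgebra B).d_mem n _ (φ_mem n x hx)) ?_ ?_
      · rw [LinearMap.comp_apply, LinearMap.comp_apply, eval_φ, eval_d_φ]
      · rw [LinearMap.comp_apply, LinearMap.comp_apply, eval_d_φ, DGVect.d_d, DGVect.d_d, map_zero,
          map_zero]
    map_one := by
      refine ext_of_mem (φ_mem 0 1 A.one_mem) (cofreeDGAlgebra B).one_mem
        ((eval_φ 1).trans ((map_one F).trans (map_one (eval B)).symm)) ?_
      change eval B ((cofreeDGAlgebra B).d (φ 1)) = eval B ((cofreeDGAlgebra B).d 1)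
      rw [eval_d_φ, DGAlgebra.d_one, DGAlgebra.d_one, map_zero, map_zero]
    map_mul := fun x y => by
      suffices A.mul.compr₂ φ = (cofreeDGAlgebra B).mul.compl₁₂ φ φ from
        LinearMap.congr_fun₂ this x y
      refine A.linearMap_ext_of_homogeneous fun i x hx =>
        A.linearMap_ext_of_homogeneous fun j y hy => ?_
      change φ (x * y) = φ x * φ y
      refine ext_of_mem (φ_mem _ _ (A.mul_mem i j x y hx hy))
        ((cofreeDGAlgebra B).mul_mem i j _ _ (φ_mem i x hx) (φ_mem j y hy)) ?_ ?_
      · rw [eval_φ, map_mul, map_mul, eval_φ, eval_φ]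
      · rw [eval_d_φ, DGAlgebra.d_mul, DGAlgebra.d_mul, DGVect.parity_of_mem hx,
          DGVect.parity_of_mem (φ_mem i x hx)]
        simp only [map_add, map_mul, map_smul, eval_φ, eval_d_φ] }

variable {C : DGCoalgebra}

/-- The twisting chain into the cofree dg algebra corresponding to a linear map. -/
def twist (f : C.carrier →ₗ[ℚ] B) : TwistingChain C (cofreeDGAlgebra B) :=
  let τ : C.carrier →ₗ[ℚ] (cofreeDGAlgebra B).carrier := ofPair 1 f (C.twistingDifferential f)
  have τ_mem (n : ℤ) (x : C.carrier) (hx : x ∈ C.grading n) :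
      τ x ∈ (cofreeDGAlgebra B).grading (n - 1) := ofPair_mem 1 _ _ hx
  have eval_τ : (eval B).toLinearMap ∘ₗ τ = f := LinearMap.ext (eval_ofPair 1 _ _)
  have eval_d_τ : (eval B).toLinearMap ∘ₗ (cofreeDGAlgebra B).d ∘ₗ τ = C.twistingDifferential f :=
    LinearMap.ext (eval_d_ofPair 1 _ _)
  have eval_twistingDifferential :
      (eval B).toLinearMap ∘ₗ C.twistingDifferential τ = C.twistingDifferential f := by
    rw [C.algHom_comp_twistingDifferential, eval_τ]
  have eval_d_twistingDifferential :
      (eval B).toLinearMap ∘ₗ (cofreeDGAlgebra B).d ∘ₗ C.twistingDifferential τ = 0 := by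
    rw [C.d_comp_twistingDifferential (DGVect.parity_comp_of_degree_neg_one τ τ_mem),
      LinearMap.comp_sub, LinearMap.comp_sub, C.algHom_comp_conv, C.algHom_comp_conv,
      ← LinearMap.comp_assoc C.d, ← LinearMap.comp_assoc C.parity, eval_d_τ, eval_τ,
      ← C.twistingDifferential_twist f]
    abel
  { toFun := τ
    mem := τ_mem
    twist := by
      refine (C.d_comp_eq_twistingDifferential_iff τ).1 <|
        C.linearMap_ext_of_homogeneous fun n x hx => ?_
      refine ext_of_mem ((cofreeDGAlgebra B).d_mem _ _ (τ_mem n x hx))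
        (C.twistingDifferential_mem τ_mem n x hx) ?_ ?_
      · exact LinearMap.congr_fun (eval_d_τ.trans eval_twistingDifferential.symm) x
      · rw [LinearMap.comp_apply, DGVect.d_d, map_zero]
        exact (LinearMap.congr_fun eval_d_twistingDifferential x).symm }

theorem eval_lift (x : A.carrier) : eval B ((lift F).toLinearMap x) = F x := eval_ofPair ..

theorem eval_twist (f : C.carrier →ₗ[ℚ] B) (c : C.carrier) :
    eval B ((twist f).toFun c) = f c := eval_ofPair ..

theorem twist_eq_zero {f : C.carrier →ₗ[ℚ] B} {c : C.carrier} {n : ℤ} (hc : c ∈ C.grading n)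
    (hf : f c = 0) (hd : C.twistingDifferential f c = 0) : (twist f).toFun c = 0 := by
  refine (ofPair_of_mem 1 _ _ hc).trans ?_
  rw [hf, hd, Prod.mk_zero_zero, Finsupp.single_zero]
  rfl

theorem lift_comp_toFun (τ : TwistingChain C A) :
    (lift F).toLinearMap ∘ₗ τ.toFun = (twist (F.toLinearMap ∘ₗ τ.toFun)).toFun := by
  refine C.linearMap_ext_of_homogeneous fun n x hx => ?_
  refine ext_of_mem ((lift F).mem _ _ (τ.mem n x hx)) ((twist _).mem n x hx) ?_ ?_
  · rw [LinearMap.comp_apply, eval_lift, eval_twist]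
    rfl
  · refine (eval_d_ofPair ..).trans (.trans ?_ (eval_d_ofPair ..).symm)
    rw [← C.algHom_comp_twistingDifferential, ← τ.d_comp_toFun]
    rfl

end cofreeDGAlgebra

/-- The homomorphism of ungraded algebras underlying a homomorphism of dg algebras. -/
def DGAlgebraHom.algHom {A A' : DGAlgebra} (F : DGAlgebraHom A A') : A.carrier →ₐ[ℚ] A'.carrier :=
  AlgHom.ofLinearMap F.toLinearMap F.map_one F.map_mul

namespace CobarData

variable {C : CoaugDGCoalgebra} (Ω : CobarData C)

theorem existsUnique_algHom {B : Type} [Ring B] [Algebra ℚ B] (f : C.carrier →ₗ[ℚ] B)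
    (hf : f C.one = 0) : ∃! F : Ω.alg.carrier →ₐ[ℚ] B, F.toLinearMap ∘ₗ Ω.t.toFun = f := by
  obtain ⟨G, hG, G_unique⟩ := Ω.univ (cofreeDGAlgebra B) (cofreeDGAlgebra.twist f)
    (cofreeDGAlgebra.twist_eq_zero C.one_mem hf (C.twistingDifferential_one hf))
  refine ⟨(cofreeDGAlgebra.eval B).comp G.algHom, LinearMap.ext fun c => ?_, fun F hF => ?_⟩
  · exact (congrArg (cofreeDGAlgebra.eval B) (LinearMap.congr_fun hG c)).trans
      (cofreeDGAlgebra.eval_twist f c)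
  · have hlift : cofreeDGAlgebra.lift F = G :=
      G_unique _ ((cofreeDGAlgebra.lift_comp_toFun F Ω.t).trans (by rw [hF]))
    subst hlift
    exact AlgHom.ext fun a => (cofreeDGAlgebra.eval_lift F a).symm

theorem adjoin_range_t : Algebra.adjoin ℚ (Set.range Ω.t.toFun) = ⊤ := by
  set S := Algebra.adjoin ℚ (Set.range Ω.t.toFun)
  let t' : C.carrier →ₗ[ℚ] S :=
    Ω.t.toFun.codRestrict (Subalgebra.toSubmodule S) fun c => Algebra.subset_adjoin ⟨c, rfl⟩
  obtain ⟨F, hF, -⟩ := Ω.existsUnique_algHom t' (Subtype.ext Ω.t_one)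
  have hid : S.val.comp F = AlgHom.id ℚ Ω.alg.carrier :=
    (Ω.existsUnique_algHom Ω.t.toFun Ω.t_one).unique
      (LinearMap.ext fun c => congrArg Subtype.val (LinearMap.congr_fun hF c)) (LinearMap.id_comp _)
  refine eq_top_iff.2 fun a _ => ?_
  rw [← AlgHom.id_apply (R := ℚ) a, ← hid]
  exact (F a).2

end CobarData

end Freeness

section FreeModules

open TensorProduct

variable {k R N P : Type*} [CommSemiring k] [Semiring R] [Algebra k R] [AddCommMonoid N]
  [Module k N] [AddCommMonoid P] [Module k P] [Module R P] [IsScalarTower k R P]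

/-- The extension of a linear map to the free `R`-module `R ⊗ N`, that is
`LinearMap.liftBaseChange` for a possibly noncommutative `R`. -/
def freeExtend (g : N →ₗ[k] P) : R ⊗[k] N →ₗ[R] P :=
  AlgebraTensorModule.lift (LinearMap.toSpanSingleton R (N →ₗ[k] P) g)

theorem freeExtend_tmul (g : N →ₗ[k] P) (r : R) (n : N) :
    freeExtend g (r ⊗ₜ[k] n) = r • g n := rfl

end FreeModules

section TwistedComplex

open TensorProduct

attribute [local instance] DGAlgebra.ring DGAlgebra.algebra DGModule.module DGModule.isScalarTower
  DGCoalgebra.coalgebra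

namespace TwistingChain

variable {C : DGCoalgebra} {A : DGAlgebra} (τ : TwistingChain C A) (M : DGModule A)

/-- The differential of the twisted extension `A ⊗_τ (C ⊗^τ M)`. -/
def totalDiff : A.carrier ⊗[ℚ] (C.carrier ⊗[ℚ] M.carrier) →ₗ[ℚ]
    A.carrier ⊗[ℚ] (C.carrier ⊗[ℚ] M.carrier) :=
  extDiff C A τ (C.carrier ⊗[ℚ] M.carrier) (coextDiff C A τ M.carrier M.d M.actionMap)
    (coextCoact C M.carrier)

theorem totalDiff_tmul {ι : Type} (a : A.carrier) {c : C.carrier} (r : Coalgebra.Repr ℚ c ι)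
    (m : M.carrier) :
    τ.totalDiff M (a ⊗ₜ (c ⊗ₜ m)) = A.d a ⊗ₜ (c ⊗ₜ m) + A.parity a ⊗ₜ (C.d c ⊗ₜ m)
      + A.parity a ⊗ₜ (C.parity c ⊗ₜ M.d m)
      + ∑ i ∈ r.index, A.parity a ⊗ₜ (C.parity (r.left i) ⊗ₜ (τ.toFun (r.right i) • m))
      - ∑ i ∈ r.index, (A.parity a * τ.toFun (r.left i)) ⊗ₜ (r.right i ⊗ₜ m) := by
  have h : coextCoact C M.carrier (c ⊗ₜ m) = ∑ i ∈ r.index, r.left i ⊗ₜ (r.right i ⊗ₜ m) := by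
    change TensorProduct.assoc ℚ _ _ _ (Coalgebra.comul (R := ℚ) c ⊗ₜ m) = _
    rw [← r.eq, sum_tmul, map_sum]
    rfl
  simp only [totalDiff, extDiff, coextDiff, coextDiffFrom, LinearMap.sub_apply,
    LinearMap.add_apply, LinearMap.comp_apply, map_tmul, h, map_sum, tmul_add, tmul_sum,
    LinearMap.id_apply, LinearEquiv.coe_coe, assoc_symm_tmul, ← add_assoc]
  rfl

/-- The map `a ⊗ c ⊗ m ↦ ε(c) a ⊗ m` from `A ⊗_τ (C ⊗^τ M)` to `A ⊗ M`. -/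
def counitProj : A.carrier ⊗[ℚ] (C.carrier ⊗[ℚ] M.carrier) →ₗ[A.carrier]
    A.carrier ⊗[ℚ] M.carrier :=
  freeExtend (TensorProduct.map (LinearMap.toSpanSingleton ℚ A.carrier 1 ∘ₗ C.counit) LinearMap.id)

theorem counitProj_tmul (a : A.carrier) (c : C.carrier) (m : M.carrier) :
    counitProj M (a ⊗ₜ (c ⊗ₜ m)) = C.counit c • (a ⊗ₜ m) := by
  simp [counitProj, freeExtend_tmul, smul_tmul']

theorem counitProj_leftParity (z : A.carrier ⊗[ℚ] (C.carrier ⊗[ℚ] M.carrier)) :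
    counitProj M (A.leftParity _ z) = A.leftParity _ (counitProj M z) := by
  suffices (counitProj M).restrictScalars ℚ ∘ₗ A.leftParity _ =
      A.leftParity _ ∘ₗ (counitProj M).restrictScalars ℚ from LinearMap.congr_fun this z
  refine TensorProduct.ext_threefold' fun a c m => ?_
  change counitProj M (A.parity a ⊗ₜ (c ⊗ₜ m)) = A.leftParity _ (counitProj M (a ⊗ₜ (c ⊗ₜ m)))
  rw [counitProj_tmul, counitProj_tmul, map_smul]
  rfl

/-- The map `a ⊗ c ⊗ m ↦ a·τ(c) ⊗ m - a ⊗ τ(c)·m` from `A ⊗ C ⊗ M` to `A ⊗ M`. -/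
def koszulMap : A.carrier ⊗[ℚ] (C.carrier ⊗[ℚ] M.carrier) →ₗ[A.carrier]
    A.carrier ⊗[ℚ] M.carrier :=
  freeExtend (TensorProduct.map τ.toFun LinearMap.id
    - TensorProduct.mk ℚ A.carrier M.carrier 1 ∘ₗ M.actionMap ∘ₗ
        TensorProduct.map τ.toFun LinearMap.id)

theorem koszulMap_tmul (a : A.carrier) (c : C.carrier) (m : M.carrier) :
    τ.koszulMap M (a ⊗ₜ (c ⊗ₜ m)) = (a * τ.toFun c) ⊗ₜ m - a ⊗ₜ (τ.toFun c • m) := by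
  rw [koszulMap, freeExtend_tmul, LinearMap.sub_apply, smul_sub]
  change (a * τ.toFun c) ⊗ₜ m - (a * 1) ⊗ₜ (τ.toFun c • m) = _
  rw [mul_one]

/-- The Koszul map with the sign `(-1)^{|a|}`, the form in which it occurs in the differential of
`A ⊗_τ (C ⊗^τ M)`. -/
def signedKoszulMap : A.carrier ⊗[ℚ] (C.carrier ⊗[ℚ] M.carrier) →ₗ[ℚ] A.carrier ⊗[ℚ] M.carrier :=
  (τ.koszulMap M).restrictScalars ℚ ∘ₗ A.leftParity (C.carrier ⊗[ℚ] M.carrier)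

theorem signedKoszulMap_apply (z : A.carrier ⊗[ℚ] (C.carrier ⊗[ℚ] M.carrier)) :
    τ.signedKoszulMap M z = τ.koszulMap M (A.leftParity _ z) := rfl

theorem signedKoszulMap_tmul (a : A.carrier) (c : C.carrier) (m : M.carrier) :
    τ.signedKoszulMap M (a ⊗ₜ (c ⊗ₜ m))
      = (A.parity a * τ.toFun c) ⊗ₜ m - A.parity a ⊗ₜ (τ.toFun c • m) :=
  τ.koszulMap_tmul M (A.parity a) c m

/-- The differential of the free dg module `A ⊗ M` on the complex underlying `M`. -/
def freeDiff : A.carrier ⊗[ℚ] M.carrier →ₗ[ℚ] A.carrier ⊗[ℚ] M.carrier :=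
  TensorProduct.map A.d LinearMap.id + TensorProduct.map A.parity M.d

theorem freeDiff_tmul (a : A.carrier) (m : M.carrier) :
    freeDiff M (a ⊗ₜ m) = A.d a ⊗ₜ m + A.parity a ⊗ₜ M.d m := rfl

theorem freeDiff_comp_freeDiff : freeDiff M ∘ₗ freeDiff M = 0 :=
  TensorProduct.ext' fun a m => by
    have h : A.parity (A.d a) = -A.d (A.parity a) := LinearMap.congr_fun DGVect.parity_comp_d a
    rw [LinearMap.comp_apply, freeDiff_tmul, map_add, freeDiff_tmul, freeDiff_tmul, DGVect.d_d,
      DGVect.d_d, h, zero_tmul, tmul_zero, neg_tmul, zero_add, add_zero, neg_add_cancel,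
      LinearMap.zero_apply]

theorem actionMap_comp_freeDiff : M.actionMap ∘ₗ freeDiff M = M.d ∘ₗ M.actionMap :=
  TensorProduct.ext' fun a m => (M.d_smul a m).symm

theorem counitProj_comp_totalDiff :
    (counitProj M).restrictScalars ℚ ∘ₗ τ.totalDiff M =
      freeDiff M ∘ₗ (counitProj M).restrictScalars ℚ - τ.signedKoszulMap M := by
  refine TensorProduct.ext_threefold' fun a c m => ?_
  have hd : C.counit (C.d c) = 0 := LinearMap.congr_fun C.counit_chain c
  have hP (c : C.carrier) : C.counit (C.parity c) = C.counit c :=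
    LinearMap.congr_fun C.counit_comp_parity c
  let r := Coalgebra.Repr.arbitrary ℚ c
  have hleft : ∑ i ∈ r.index, C.counit (r.left i) • (A.parity a ⊗ₜ[ℚ] (τ.toFun (r.right i) • m))
      = A.parity a ⊗ₜ (τ.toFun c • m) := by
    conv_rhs => rw [← Coalgebra.sum_counit_smul r]
    simp only [map_sum, map_smul, Finset.sum_smul, tmul_sum, smul_assoc, tmul_smul]
    rfl
  have hright : ∑ i ∈ r.index, C.counit (r.right i) • ((A.parity a * τ.toFun (r.left i)) ⊗ₜ[ℚ] m)
      = (A.parity a * τ.toFun c) ⊗ₜ m := by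
    have hc : ∑ i ∈ r.index, C.counit (r.right i) • r.left i = c := by
      have h := congrArg (TensorProduct.rid ℚ C.carrier) (Coalgebra.sum_tmul_counit_eq r)
      simp only [map_sum, rid_tmul, one_smul] at h
      exact h
    conv_rhs => rw [← hc]
    simp only [map_sum, map_smul, Finset.mul_sum, mul_smul_comm, sum_tmul, smul_tmul']
  simp only [LinearMap.comp_apply, LinearMap.sub_apply, LinearMap.restrictScalars_apply,
    τ.totalDiff_tmul M a r m, map_add, map_sub, map_sum, counitProj_tmul, signedKoszulMap_tmul,
    map_smul, freeDiff_tmul, hd, hP, hleft, hright, zero_smul, smul_add]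
  abel

theorem d_toFun {ι : Type} {c : C.carrier} (r : Coalgebra.Repr ℚ c ι) :
    A.d (τ.toFun c) = -τ.toFun (C.d c)
      - ∑ i ∈ r.index, τ.toFun (C.parity (r.left i)) * τ.toFun (r.right i) :=
  (LinearMap.congr_fun τ.d_comp_toFun c).trans <|
    congrArg (-τ.toFun (C.d c) - ·) <| r.convMul_apply
      (f := WithConv.toConv (τ.toFun ∘ₗ C.parity)) (g := WithConv.toConv τ.toFun)

theorem signedKoszulMap_comp_totalDiff :
    τ.signedKoszulMap M ∘ₗ τ.totalDiff M = -(freeDiff M ∘ₗ τ.signedKoszulMap M) := by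
  refine TensorProduct.ext_threefold' fun a c m => ?_
  have hPd : A.parity (A.d a) = -A.d (A.parity a) := LinearMap.congr_fun DGVect.parity_comp_d a
  have hPτ (c : C.carrier) : A.parity (τ.toFun c) = -τ.toFun (C.parity c) :=
    LinearMap.congr_fun τ.parity_comp_toFun c
  let r := Coalgebra.Repr.arbitrary ℚ c
  simp only [LinearMap.comp_apply, LinearMap.neg_apply, τ.totalDiff_tmul M a r m, map_add, map_sub,
    map_sum, signedKoszulMap_tmul, freeDiff_tmul, hPd, hPτ, DGVect.parity_parity,
    DGAlgebra.parity_mul, DGAlgebra.d_mul, M.d_smul, τ.d_toFun r]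
  simp only [mul_sub, sub_smul, add_tmul, sub_tmul, tmul_add, tmul_sub, neg_tmul, tmul_neg,
    neg_mul, mul_neg, neg_smul, Finset.sum_smul, Finset.mul_sum, tmul_sum, sum_tmul,
    Finset.sum_sub_distrib, Finset.sum_neg_distrib, mul_assoc, mul_smul]
  abel

end TwistingChain

end TwistedComplex

section Cone

theorem isQuasiIso_comp_of_cone {T E M : Type} [AddCommGroup T] [Module ℚ T] [AddCommGroup E]
    [Module ℚ E] [AddCommGroup M] [Module ℚ M] {dT : T →ₗ[ℚ] T} {dE : E →ₗ[ℚ] E}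
    {dM : M →ₗ[ℚ] M} {p δ : T →ₗ[ℚ] E} {π : E →ₗ[ℚ] M} (hdE : dE ∘ₗ dE = 0)
    (hπ : π ∘ₗ dE = dM ∘ₗ π) (hp : p ∘ₗ dT = dE ∘ₗ p - δ) (hδ : δ ∘ₗ dT = -(dE ∘ₗ δ))
    (π_surj : Function.Surjective π) (pδ_inj : ∀ z, p z = 0 → δ z = 0 → z = 0)
    (pδ_surj : ∀ u v, π v = 0 → ∃ z, p z = u ∧ δ z = v) :
    IsQuasiIso dT dM (π ∘ₗ p) := by
  have p_dT (z : T) : p (dT z) = dE (p z) - δ z := LinearMap.congr_fun hp z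
  have dE_dE (u : E) : dE (dE u) = 0 := LinearMap.congr_fun hdE u
  have δ_dT (z : T) : δ (dT z) = -dE (δ z) := LinearMap.congr_fun hδ z
  have π_dE (u : E) : π (dE u) = dM (π u) := LinearMap.congr_fun hπ u
  constructor
  · rintro x hx ⟨m, hm⟩
    obtain ⟨u, rfl⟩ := π_surj m
    have hv : π (dE u - p x) = 0 := by
      rw [map_sub, π_dE, ← hm, LinearMap.comp_apply, sub_self]
    obtain ⟨z, hz, hz'⟩ := pδ_surj u (dE u - p x) hv
    refine ⟨z, sub_eq_zero.1 (pδ_inj _ ?_ ?_)⟩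
    · rw [map_sub, p_dT, hz, hz', sub_sub_cancel, sub_self]
    · have hδx : dE (p x) = δ x := by rw [← sub_eq_zero, ← p_dT, hx, map_zero]
      rw [map_sub, δ_dT, hz', map_sub, dE_dE, hδx, zero_sub, neg_neg, sub_self]
  · intro m hm
    obtain ⟨u, rfl⟩ := π_surj m
    obtain ⟨z, hz, hz'⟩ := pδ_surj u (dE u) (by rw [π_dE, hm])
    refine ⟨z, pδ_inj _ ?_ ?_, 0, ?_⟩
    · rw [p_dT, hz, hz', sub_self]
    · rw [δ_dT, hz', dE_dE, neg_zero]
    · rw [LinearMap.comp_apply, hz, sub_self, map_zero]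

end Cone

section Counit

open TensorProduct

attribute [local instance] DGAlgebra.ring DGAlgebra.algebra DGModule.module DGModule.isScalarTower

namespace CobarData

open TwistingChain

variable {C : CoaugDGCoalgebra} (Ω : CobarData C)

theorem induction_on {P : Ω.alg.carrier → Prop} (a : Ω.alg.carrier) (one : P 1)
    (t : ∀ c, P (Ω.t.toFun c)) (smul : ∀ (r : ℚ) x, P x → P (r • x))
    (add : ∀ x y, P x → P y → P (x + y)) (mul : ∀ x y, P x → P y → P (x * y)) : P a := by
  have ha : a ∈ Algebra.adjoin ℚ (Set.range Ω.t.toFun) := Ω.adjoin_range_t ▸ Algebra.mem_top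
  induction ha using Algebra.adjoin_induction with
  | mem x hx => obtain ⟨c, rfl⟩ := hx; exact t c
  | algebraMap r => rw [Algebra.algebraMap_eq_smul_one]; exact smul r 1 one
  | add x y _ _ hx hy => exact add x y hx hy
  | mul x y _ _ hx hy => exact mul x y hx hy

theorem exists_algHom_lowerTriangular {M N : Type} [AddCommGroup M] [Module ℚ M]
    [Module Ω.alg.carrier M] [IsScalarTower ℚ Ω.alg.carrier M] [AddCommGroup N] [Module ℚ N]
    [Module Ω.alg.carrier N] [IsScalarTower ℚ Ω.alg.carrier N] (f : C.carrier →ₗ[ℚ] M →ₗ[ℚ] N)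
    (hf : f C.one = 0) :
    ∃ F : Ω.alg.carrier →ₐ[ℚ] Module.End ℚ (M × N),
      (∀ c m n, F (Ω.t.toFun c) (m, n) = (Ω.t.toFun c • m, Ω.t.toFun c • n + f c m)) ∧
      ∀ a, ∃ φ : M → N, ∀ m n, F a (m, n) = (a • m, a • n + φ m) := by
  let diag : Ω.alg.carrier →ₐ[ℚ] Module.End ℚ (M × N) := Algebra.lsmul ℚ ℚ (M × N)
  let lower : (M →ₗ[ℚ] N) →ₗ[ℚ] Module.End ℚ (M × N) :=
    LinearMap.lcomp ℚ (M × N) (LinearMap.fst ℚ M N) ∘ₗ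
      LinearMap.llcomp ℚ M N (M × N) (LinearMap.inr ℚ M N)
  obtain ⟨F, hF, -⟩ := Ω.existsUnique_algHom (diag.toLinearMap ∘ₗ Ω.t.toFun + lower ∘ₗ f) (by
    rw [LinearMap.add_apply, LinearMap.comp_apply, LinearMap.comp_apply, Ω.t_one, hf, map_zero,
      map_zero, add_zero])
  have F_t (c : C.carrier) (m : M) (n : N) :
      F (Ω.t.toFun c) (m, n) = (Ω.t.toFun c • m, Ω.t.toFun c • n + f c m) := by
    refine (congrArg (· (m, n)) (LinearMap.congr_fun hF c)).trans ?_
    exact Prod.ext (add_zero _) rfl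
  refine ⟨F, F_t, fun a => ?_⟩
  induction a using Ω.induction_on with
  | one => exact ⟨0, by simp⟩
  | t c => exact ⟨f c, F_t c⟩
  | smul r x hx =>
    obtain ⟨φ, hφ⟩ := hx
    exact ⟨r • φ, by simp [hφ]⟩
  | add x y hx hy =>
    obtain ⟨⟨φ, hφ⟩, ψ, hψ⟩ := And.intro hx hy
    exact ⟨φ + ψ, by simp [hφ, hψ, add_smul, add_add_add_comm]⟩
  | mul x y hx hy =>
    obtain ⟨⟨φ, hφ⟩, ψ, hψ⟩ := And.intro hx hy
    exact ⟨fun m => x • ψ m + φ (y • m), by simp [hφ, hψ, mul_smul, add_assoc]⟩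

theorem exists_derivation {M N : Type} [AddCommGroup M] [Module ℚ M] [Module Ω.alg.carrier M]
    [IsScalarTower ℚ Ω.alg.carrier M] [AddCommGroup N] [Module ℚ N] [Module Ω.alg.carrier N]
    [IsScalarTower ℚ Ω.alg.carrier N] (f : C.carrier →ₗ[ℚ] M →ₗ[ℚ] N) (hf : f C.one = 0) :
    ∃ s : Ω.alg.carrier →ₗ[ℚ] M →ₗ[ℚ] N, (∀ c, s (Ω.t.toFun c) = f c) ∧
      ∀ a b m, s (a * b) m = a • s b m + s a (b • m) := by
  obtain ⟨F, F_t, hF⟩ := Ω.exists_algHom_lowerTriangular f hf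
  let corner : Module.End ℚ (M × N) →ₗ[ℚ] M →ₗ[ℚ] N :=
    LinearMap.lcomp ℚ N (LinearMap.inl ℚ M N) ∘ₗ
      LinearMap.llcomp ℚ (M × N) (M × N) N (LinearMap.snd ℚ M N)
  have corner_apply (φ : Module.End ℚ (M × N)) (m : M) : corner φ m = (φ (m, 0)).2 := rfl
  have F_apply (a : Ω.alg.carrier) (m : M) (n : N) :
      F a (m, n) = (a • m, a • n + corner (F a) m) := by
    obtain ⟨φ, hφ⟩ := hF a
    rw [corner_apply, hφ, hφ, smul_zero, zero_add]
  refine ⟨corner ∘ₗ F.toLinearMap, fun c => LinearMap.ext fun m => ?_, fun a b m => ?_⟩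
  · rw [LinearMap.comp_apply, AlgHom.toLinearMap_apply, corner_apply, F_t, smul_zero, zero_add]
  · simp only [LinearMap.comp_apply, AlgHom.toLinearMap_apply]
    rw [corner_apply (F (a * b)), map_mul, Module.End.mul_apply, F_apply b, F_apply a, smul_zero,
      zero_add]

variable (M : DGModule Ω.alg)

theorem exists_koszulDerivation :
    ∃ s : Ω.alg.carrier →ₗ[ℚ] M.carrier →ₗ[ℚ] Ω.alg.carrier ⊗[ℚ] (C.carrier ⊗[ℚ] M.carrier),
      (∀ c m, s (Ω.t.toFun c) m = 1 ⊗ₜ ((c - C.counit c • C.one) ⊗ₜ m)) ∧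
      ∀ a b m, s (a * b) m = a • s b m + s a (b • m) := by
  let reduce : C.carrier →ₗ[ℚ] C.carrier := LinearMap.id - C.counit.smulRight C.one
  have reduce_one : reduce C.one = 0 := by
    change C.one - C.counit C.one • C.one = 0
    rw [C.counit_one, one_smul, sub_self]
  obtain ⟨s, s_t, s_mul⟩ := Ω.exists_derivation
    ((TensorProduct.mk ℚ C.carrier M.carrier ∘ₗ reduce).compr₂
      (TensorProduct.mk ℚ Ω.alg.carrier (C.carrier ⊗[ℚ] M.carrier) 1))
    (LinearMap.ext fun m => by
      rw [LinearMap.compr₂_apply, LinearMap.comp_apply, reduce_one, map_zero, LinearMap.zero_apply,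
        map_zero, LinearMap.zero_apply])
  exact ⟨s, fun c m => LinearMap.congr_fun (s_t c) m, s_mul⟩

/-- The derivation `s` of `ΩC` with values in the bimodule of linear maps `M → ΩC ⊗ C ⊗ M` with
`s(tc)(m) = 1 ⊗ (c - ε(c)1) ⊗ m`. -/
def koszulDerivation :
    Ω.alg.carrier →ₗ[ℚ] M.carrier →ₗ[ℚ] Ω.alg.carrier ⊗[ℚ] (C.carrier ⊗[ℚ] M.carrier) :=
  (Ω.exists_koszulDerivation M).choose

theorem koszulDerivation_t (c : C.carrier) (m : M.carrier) :
    Ω.koszulDerivation M (Ω.t.toFun c) m = 1 ⊗ₜ ((c - C.counit c • C.one) ⊗ₜ m) :=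
  (Ω.exists_koszulDerivation M).choose_spec.1 c m

theorem koszulDerivation_mul (a b : Ω.alg.carrier) (m : M.carrier) :
    Ω.koszulDerivation M (a * b) m
      = a • Ω.koszulDerivation M b m + Ω.koszulDerivation M a (b • m) :=
  (Ω.exists_koszulDerivation M).choose_spec.2 a b m

theorem koszulDerivation_one : Ω.koszulDerivation M 1 = 0 := by
  ext m
  have h := Ω.koszulDerivation_mul M 1 1 m
  rwa [mul_one, one_smul, one_smul, left_eq_add] at h

theorem counitProj_koszulDerivation (a : Ω.alg.carrier) (m : M.carrier) :
    counitProj M (Ω.koszulDerivation M a m) = 0 := by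
  induction a using Ω.induction_on generalizing m with
  | one => rw [koszulDerivation_one, LinearMap.zero_apply, map_zero]
  | t c =>
    rw [koszulDerivation_t, counitProj_tmul, map_sub, map_smul, C.counit_one, smul_eq_mul, mul_one,
      sub_self, zero_smul]
  | smul r x hx => rw [map_smul, LinearMap.smul_apply, LinearMap.map_smul_of_tower, hx, smul_zero]
  | add x y hx hy => rw [map_add, LinearMap.add_apply, map_add, hx, hy, add_zero]
  | mul x y hx hy => rw [koszulDerivation_mul, map_add, map_smul, hy, hx, smul_zero, add_zero]

theorem koszulMap_koszulDerivation (a : Ω.alg.carrier) (m : M.carrier) :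
    Ω.t.koszulMap M (Ω.koszulDerivation M a m) = a ⊗ₜ m - 1 ⊗ₜ (a • m) := by
  induction a using Ω.induction_on generalizing m with
  | one => rw [koszulDerivation_one, LinearMap.zero_apply, map_zero, one_smul, sub_self]
  | t c =>
    rw [koszulDerivation_t, koszulMap_tmul, map_sub, map_smul, Ω.t_one, smul_zero, sub_zero,
      one_mul]
  | smul r x hx =>
    rw [map_smul, LinearMap.smul_apply, LinearMap.map_smul_of_tower, hx, smul_sub, smul_tmul',
      ← tmul_smul, smul_assoc]
  | add x y hx hy =>
    rw [map_add, LinearMap.add_apply, map_add, hx, hy, add_tmul, add_smul, tmul_add,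
      add_sub_add_comm]
  | mul x y hx hy =>
    rw [koszulDerivation_mul, map_add, map_smul, hy, hx, smul_sub, smul_tmul', smul_tmul',
      smul_eq_mul, smul_eq_mul, mul_one, mul_smul, sub_add_sub_cancel]

/-- A section of the Koszul map over the kernel of the action map `ΩC ⊗ M → M`. -/
def koszulSection :
    Ω.alg.carrier ⊗[ℚ] M.carrier →ₗ[ℚ] Ω.alg.carrier ⊗[ℚ] (C.carrier ⊗[ℚ] M.carrier) :=
  TensorProduct.lift (Ω.koszulDerivation M)

theorem counitProj_koszulSection (u : Ω.alg.carrier ⊗[ℚ] M.carrier) :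
    counitProj M (Ω.koszulSection M u) = 0 := by
  induction u with
  | zero => rw [map_zero, map_zero]
  | tmul a m => exact Ω.counitProj_koszulDerivation M a m
  | add x y hx hy => rw [map_add, map_add, hx, hy, add_zero]

theorem koszulMap_koszulSection (u : Ω.alg.carrier ⊗[ℚ] M.carrier) :
    Ω.t.koszulMap M (Ω.koszulSection M u) = u - 1 ⊗ₜ M.actionMap u := by
  induction u with
  | zero => simp only [map_zero, tmul_zero, sub_zero]
  | tmul a m => exact Ω.koszulMap_koszulDerivation M a m
  | add x y hx hy => rw [map_add, map_add, map_add, hx, hy, tmul_add, add_sub_add_comm]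

/-- The inclusion `a ⊗ m ↦ a ⊗ 1 ⊗ m`. -/
def insertOne :
    Ω.alg.carrier ⊗[ℚ] M.carrier →ₗ[ℚ] Ω.alg.carrier ⊗[ℚ] (C.carrier ⊗[ℚ] M.carrier) :=
  TensorProduct.map LinearMap.id (TensorProduct.mk ℚ C.carrier M.carrier C.one)

theorem counitProj_insertOne (u : Ω.alg.carrier ⊗[ℚ] M.carrier) :
    counitProj M (insertOne Ω M u) = u := by
  induction u with
  | zero => rw [map_zero, map_zero]
  | tmul a m => exact (counitProj_tmul M a C.one m).trans (by rw [C.counit_one, one_smul])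
  | add x y hx hy => rw [map_add, map_add, hx, hy]

theorem signedKoszulMap_insertOne (u : Ω.alg.carrier ⊗[ℚ] M.carrier) :
    Ω.t.signedKoszulMap M (insertOne Ω M u) = 0 := by
  induction u with
  | zero => rw [map_zero, map_zero]
  | tmul a m =>
    refine (Ω.t.signedKoszulMap_tmul M a C.one m).trans ?_
    rw [Ω.t_one, mul_zero, zero_tmul, zero_smul, tmul_zero, sub_zero]
  | add x y hx hy => rw [map_add, map_add, hx, hy, add_zero]

theorem koszulSection_koszulMap (z : Ω.alg.carrier ⊗[ℚ] (C.carrier ⊗[ℚ] M.carrier)) :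
    Ω.koszulSection M (Ω.t.koszulMap M z) = z - insertOne Ω M (counitProj M z) := by
  suffices Ω.koszulSection M ∘ₗ (Ω.t.koszulMap M).restrictScalars ℚ =
      LinearMap.id - insertOne Ω M ∘ₗ (counitProj M).restrictScalars ℚ from
    LinearMap.congr_fun this z
  refine TensorProduct.ext_threefold' fun a c m => ?_
  change Ω.koszulSection M (Ω.t.koszulMap M (a ⊗ₜ (c ⊗ₜ m)))
    = a ⊗ₜ (c ⊗ₜ m) - insertOne Ω M (counitProj M (a ⊗ₜ (c ⊗ₜ m)))
  rw [koszulMap_tmul, counitProj_tmul, map_sub, map_smul]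
  change Ω.koszulDerivation M (a * Ω.t.toFun c) m - Ω.koszulDerivation M a (Ω.t.toFun c • m)
    = a ⊗ₜ (c ⊗ₜ m) - C.counit c • (a ⊗ₜ (C.one ⊗ₜ m))
  rw [koszulDerivation_mul, koszulDerivation_t, add_sub_cancel_right, smul_tmul', smul_eq_mul,
    mul_one, sub_tmul, tmul_sub, ← smul_tmul', tmul_smul]

theorem eq_zero_of_counitProj_eq_zero_of_signedKoszulMap_eq_zero
    {z : Ω.alg.carrier ⊗[ℚ] (C.carrier ⊗[ℚ] M.carrier)} (hp : counitProj M z = 0)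
    (hδ : Ω.t.signedKoszulMap M z = 0) : z = 0 := by
  have h := Ω.koszulSection_koszulMap M (Ω.alg.leftParity _ z)
  rw [counitProj_leftParity, hp, map_zero, map_zero, sub_zero] at h
  rw [← DGVect.leftParity_leftParity z, ← h, ← signedKoszulMap_apply, hδ, map_zero, map_zero]

theorem exists_counitProj_eq_signedKoszulMap_eq (u v : Ω.alg.carrier ⊗[ℚ] M.carrier)
    (hv : M.actionMap v = 0) :
    ∃ z, counitProj M z = u ∧ Ω.t.signedKoszulMap M z = v := by
  refine ⟨Ω.alg.leftParity _ (Ω.koszulSection M v) + insertOne Ω M u, ?_, ?_⟩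
  · rw [map_add, counitProj_leftParity, counitProj_koszulSection, map_zero, counitProj_insertOne,
      zero_add]
  · rw [map_add, signedKoszulMap_insertOne, add_zero, signedKoszulMap_apply,
      DGVect.leftParity_leftParity, koszulMap_koszulSection, hv, tmul_zero, sub_zero]

theorem cobarCounit_eq :
    cobarCounit C Ω M = M.actionMap ∘ₗ (counitProj M).restrictScalars ℚ := by
  refine TensorProduct.ext_threefold' fun a c m => ?_
  change M.smul a (C.counit c • m) = M.actionMap (counitProj M (a ⊗ₜ (c ⊗ₜ m)))
  rw [counitProj_tmul, map_smul, map_smul]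
  rfl

theorem cobarCounit_comp_extAction :
    cobarCounit C Ω M ∘ₗ extAction Ω.alg (C.carrier ⊗[ℚ] M.carrier)
      = M.actionMap ∘ₗ TensorProduct.map LinearMap.id (cobarCounit C Ω M) :=
  TensorProduct.ext' fun a z => by
    induction z with
    | zero => rw [tmul_zero, map_zero, map_zero]
    | tmul b w => exact M.mul_smul' a b _
    | add x y hx hy => rw [tmul_add, map_add, map_add, hx, hy]

theorem comp_cobarCounit {M M' : DGModule Ω.alg} {g : M.carrier →ₗ[ℚ] M'.carrier}
    (hg : g ∘ₗ M.actionMap = M'.actionMap ∘ₗ TensorProduct.map LinearMap.id g) :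
    g ∘ₗ cobarCounit C Ω M
      = cobarCounit C Ω M' ∘ₗ TensorProduct.map LinearMap.id (TensorProduct.map LinearMap.id g) :=
  TensorProduct.ext_threefold' fun a c m =>
    (LinearMap.congr_fun hg (a ⊗ₜ (C.counit c • m))).trans
      (congrArg (M'.smul a) (map_smul g (C.counit c) m))

theorem isQuasiIso_cobarCounit :
    IsQuasiIso (Ω.t.totalDiff M) M.d (cobarCounit C Ω M) :=
  Ω.cobarCounit_eq M ▸ isQuasiIso_comp_of_cone (freeDiff_comp_freeDiff M)
    (actionMap_comp_freeDiff M) (Ω.t.counitProj_comp_totalDiff M)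
    (Ω.t.signedKoszulMap_comp_totalDiff M) (fun m => ⟨1 ⊗ₜ m, M.one_smul' m⟩)
    (fun _ => Ω.eq_zero_of_counitProj_eq_zero_of_signedKoszulMap_eq_zero M)
    (Ω.exists_counitProj_eq_signedKoszulMap_eq M)

end CobarData

end Counit

theorem cobar_counit_is_quasiIso_general (C : CoaugDGCoalgebra) (Ω : CobarData C)
    (M : DGModule Ω.alg) :
    (cobarCounit C Ω M).comp (extAction Ω.alg (C.carrier ⊗[ℚ] M.carrier))
      = M.actionMap.comp (TensorProduct.map LinearMap.id (cobarCounit C Ω M)) ∧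
    IsQuasiIso
      (extDiff C.toDGCoalgebra Ω.alg Ω.t (C.carrier ⊗[ℚ] M.carrier)
        (coextDiff C.toDGCoalgebra Ω.alg Ω.t M.carrier M.d M.actionMap)
        (coextCoact C.toDGCoalgebra M.carrier))
      M.d (cobarCounit C Ω M) ∧
    (∀ (M' : DGModule Ω.alg) (g : M.carrier →ₗ[ℚ] M'.carrier), IsModuleHom Ω.alg M M' g →
      g.comp (cobarCounit C Ω M)
        = (cobarCounit C Ω M').comp
            (TensorProduct.map LinearMap.id (TensorProduct.map LinearMap.id g))) :=
  ⟨Ω.cobarCounit_comp_extAction M, Ω.isQuasiIso_cobarCounit M, fun _ _ hg =>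
    Ω.comp_cobarCounit hg.2.2⟩

/-- For a 2-reduced cocommutative dg coalgebra `C` with universal
twisting chain `t : C ⇝ ΩC` and any left dg `ΩC`-module `M`, the counit
`t^! t_* M = ΩC ⊗_t (C ⊗^t M) → M`, `a ⊗ c ⊗ m ↦ ε(c)·(a·m)` is a quasi-isomorphism
of `ΩC`-modules, natural in `M`. -/
theorem cobar_counit_is_quasiIso (C : CoaugDGCoalgebra) (hred : C.TwoReduced)
    (hcc : C.toDGCoalgebra.Cocomm) (Ω : CobarData C) (M : DGModule Ω.alg) :
    -- the counit is `ΩC`-linear: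
    (cobarCounit C Ω M).comp (extAction Ω.alg (C.carrier ⊗[ℚ] M.carrier))
      = M.actionMap.comp (TensorProduct.map LinearMap.id (cobarCounit C Ω M)) ∧
    -- it is a quasi-isomorphism:
    IsQuasiIso
      (extDiff C.toDGCoalgebra Ω.alg Ω.t (C.carrier ⊗[ℚ] M.carrier)
        (coextDiff C.toDGCoalgebra Ω.alg Ω.t M.carrier M.d M.actionMap)
        (coextCoact C.toDGCoalgebra M.carrier))
      M.d (cobarCounit C Ω M) ∧
    -- and it is natural in `M`:
    (∀ (M' : DGModule Ω.alg) (g : M.carrier →ₗ[ℚ] M'.carrier), IsModuleHom Ω.alg M M' g →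
      g.comp (cobarCounit C Ω M)
        = (cobarCounit C Ω M').comp
            (TensorProduct.map LinearMap.id (TensorProduct.map LinearMap.id g))) :=
  cobar_counit_is_quasiIso_general C Ω M

end
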